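/- Suppose Σ_{i∈U} p_i ≥ αk for some α > 1. Let i, j ∈ U with i ≠ j, and let Pr'_{PL+C} denote PL+C probabilities after replacing p_j by some p_j' with p_j < p_j' ≤ 1 (all other parameters unchanged). Then Pr'_{PL+C}(R_{i=1}) ≤ Pr_{PL+C}(R_{i=1}) + (α e^{1-α})^k / (1 - (α e^{1-α})^k), where R_{i=1} is the set of length-k rankings with item i in first position. -/

import Mathlib

open scoped Classical
open Finset

noncomputable section

/-- Weight of a consideration set `C`: each item in `C` is considered (prob `p i`),
each item outside is not considered (prob `1 - p j`). -/
def considerWeight (n : ℕ) (p : Fin n → ℝ) (C : Finset (Fin n)) : ℝ :=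
  (∏ i ∈ C, p i) * ∏ j ∈ Cᶜ, (1 - p j)

/-- Normalizing constant `z_{k,p}`: total weight of consideration sets of size at least `k`. -/
def zConst (n k : ℕ) (p : Fin n → ℝ) : ℝ :=
  ∑ C ∈ Finset.univ.filter (fun C : Finset (Fin n) => k ≤ C.card), considerWeight n p C

/-- Probability of consideration set `C` (conditioned on `|C| ≥ k`). -/
def prC (n k : ℕ) (p : Fin n → ℝ) (C : Finset (Fin n)) : ℝ :=
  if k ≤ C.card then considerWeight n p C / zConst n k p else 0

/-- Plackett–Luce probability of the length-`k` ranking `r` given consideration set `C`. -/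
def prPL (n k : ℕ) (u : Fin n → ℝ) (r : Fin k ↪ Fin n) (C : Finset (Fin n)) : ℝ :=
  if ∀ t : Fin k, r t ∈ C then
    ∏ t : Fin k, Real.exp (u (r t)) /
      ∑ j ∈ C \ (Finset.Iio t).image r, Real.exp (u j)
  else 0

/-- Plackett–Luce-with-consideration (PL+C) probability of the ranking `r`. -/
def prPLC (n k : ℕ) (u p : Fin n → ℝ) (r : Fin k ↪ Fin n) : ℝ :=
  ∑ C : Finset (Fin n), prC n k p C * prPL n k u r C

/-- PL probability of a set of rankings. -/
def prPLset (n k : ℕ) (u : Fin n → ℝ) (R : Finset (Fin k ↪ Fin n)) (C : Finset (Fin n)) : ℝ :=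
  ∑ r ∈ R, prPL n k u r C

/-- PL+C probability of a set of rankings. -/
def prPLCset (n k : ℕ) (u p : Fin n → ℝ) (R : Finset (Fin k ↪ Fin n)) : ℝ :=
  ∑ r ∈ R, prPLC n k u p r

/-- `R_{i≤ℓ}`: the set of length-`k` rankings with item `i` among the top `ℓ` positions. -/
def topSet (n k : ℕ) (i : Fin n) (ℓ : ℕ) : Finset (Fin k ↪ Fin n) :=
  Finset.univ.filter (fun r => ∃ t : Fin k, (t : ℕ) < ℓ ∧ r t = i)

/-!
Write `z = Pr(|C| ≥ k)` for the independently drawn consideration set `C`, and let `M` be the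
*unconditioned* expectation of the Plackett–Luce probability that `i` is not among the top `ℓ`,
counted as `0` when `|C| < k`. For a fixed consideration set this probability can only grow when an
item `j ≠ i` is added: by independence of irrelevant alternatives, adding `j` amounts to picking `j`
first with some probability and otherwise picking as before, and spending a pick on `j` leaves `i`
one position fewer. Hence `M` is monotone in `p j`, a statement that would fail for the probability
that `i` *is* in the top `ℓ`, since adding `j` may lift `|C|` to `k`.

Conditioning on `|C| ≥ k` replaces `M` by `M / z`, and `M ≤ M / z ≤ M + (1 - z)` because
`M ≤ z ≤ 1`. So raising `p j` costs at most `1 - z = Pr(|C| < k)`, which a Chernoff bound controls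
by `(α e^{1-α})^k`.
-/

section PlackettLuce

variable {n k : ℕ} (u : Fin n → ℝ) {C D : Finset (Fin n)} {i j : Fin n}

/-- The probability `e^{u_a} / ∑_{b ∈ C} e^{u_b}` that Plackett–Luce picks `a` first from the
consideration set `C`. The value at `a ∉ C` is junk, not `0`. -/
def firstChoice (C : Finset (Fin n)) (a : Fin n) : ℝ :=
  Real.exp (u a) / ∑ b ∈ C, Real.exp (u b)

lemma firstChoice_nonneg (C : Finset (Fin n)) (a : Fin n) : 0 ≤ firstChoice u C a := by
  unfold firstChoice; positivity

lemma sum_firstChoice (hC : C.Nonempty) : ∑ a ∈ C, firstChoice u C a = 1 := by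
  have hpos : 0 < ∑ b ∈ C, Real.exp (u b) := sum_pos (fun b _ ↦ Real.exp_pos (u b)) hC
  simp only [firstChoice, ← sum_div, div_self hpos.ne']

lemma firstChoice_le_one {a : Fin n} (ha : a ∈ C) : firstChoice u C a ≤ 1 := by
  rw [← sum_firstChoice u ⟨a, ha⟩]
  exact single_le_sum (fun b _ ↦ firstChoice_nonneg u C b) ha

lemma firstChoice_insert (hD : D.Nonempty) (hj : j ∉ D) (a : Fin n) :
    firstChoice u (insert j D) a = (1 - firstChoice u (insert j D) j) * firstChoice u D a := by
  have : 0 < ∑ b ∈ D, Real.exp (u b) := sum_pos (fun b _ ↦ Real.exp_pos (u b)) hD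
  have := Real.exp_pos (u j)
  simp only [firstChoice, sum_insert hj]
  field_simp
  ring

lemma prPL_nonneg (r : Fin k ↪ Fin n) (C : Finset (Fin n)) : 0 ≤ prPL n k u r C := by
  unfold prPL; split_ifs <;> positivity

lemma prPL_eq_zero {r : Fin k ↪ Fin n} {t : Fin k} (ht : r t ∉ C) : prPL n k u r C = 0 :=
  if_neg fun h ↦ ht (h t)

lemma sdiff_image_Iio_succ (r : Fin (k + 1) ↪ Fin n) (C : Finset (Fin n)) (t : Fin k) :
    C \ (Iio t.succ).image r = C.erase (r 0) \ (Iio t).image (Fin.Embedding.tail r) := by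
  ext x
  simp only [mem_sdiff, mem_image, mem_Iio, mem_erase, Fin.exists_fin_succ, Fin.succ_pos,
    Fin.succ_lt_succ_iff, true_and, Fin.Embedding.coe_tail, Fin.tail]
  grind

lemma prPL_succ {r : Fin (k + 1) ↪ Fin n} (hr : r 0 ∈ C) :
    prPL n (k + 1) u r C =
      firstChoice u C (r 0) * prPL n k u (Fin.Embedding.tail r) (C.erase (r 0)) := by
  have hmem : (∀ t, r t ∈ C) ↔ ∀ t, Fin.Embedding.tail r t ∈ C.erase (r 0) := by
    simp [Fin.forall_fin_succ, hr, Fin.tail]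
  simp only [prPL, hmem, mul_ite, mul_zero, Fin.prod_univ_succ, sdiff_image_Iio_succ]
  simp [firstChoice, Fin.tail, ← bot_eq_zero]

lemma prPLset_succ {R : Finset (Fin (k + 1) ↪ Fin n)} {S : Fin n → Finset (Fin k ↪ Fin n)}
    (hRS : ∀ r, r ∈ R ↔ Fin.Embedding.tail r ∈ S (r 0)) (C : Finset (Fin n)) :
    prPLset n (k + 1) u R C =
      ∑ a ∈ C, firstChoice u C a * prPLset n k u (S a) (C.erase a) := by
  set f : (Fin k ↪ Fin n) → Fin n → ℝ := fun e a ↦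
    if a ∈ C ∧ e ∈ S a then firstChoice u C a * prPL n k u e (C.erase a) else 0 with hf
  have hf_range (e : Fin k ↪ Fin n) (t : Fin k) : f e (e t) = 0 := by
    simp [hf, prPL_eq_zero u (notMem_erase (e t) C)]
  calc ∑ r ∈ R, prPL n (k + 1) u r C
      = ∑ r : Fin (k + 1) ↪ Fin n, f (Fin.Embedding.tail r) (r 0) := by
        rw [← Fintype.sum_ite_mem]
        refine sum_congr rfl fun r _ ↦ ?_
        by_cases hr : r 0 ∈ C
        · simp [hf, hr, hRS, prPL_succ]
        · simp [hf, hr, prPL_eq_zero u hr]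
    _ = ∑ x : Σ e : Fin k ↪ Fin n, {a // a ∉ Set.range e}, f x.1 x.2 :=
        Fintype.sum_equiv (Equiv.embeddingFinSucc k (Fin n)) _ _ fun _ ↦ rfl
    _ = ∑ e, ∑ a, f e a := by
        rw [Fintype.sum_sigma]
        refine sum_congr rfl fun e _ ↦ ?_
        rw [← sum_subtype {a | a ∉ Set.range e} (by simp) (f e)]
        refine sum_subset (subset_univ _) fun a _ ha ↦ ?_
        obtain ⟨t, rfl⟩ : a ∈ Set.range e := by simpa using ha
        exact hf_range e t
    _ = ∑ a ∈ C, firstChoice u C a * ∑ e ∈ S a, prPL n k u e (C.erase a) := by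
        rw [sum_comm, ← Fintype.sum_ite_mem C]
        refine sum_congr rfl fun a _ ↦ ?_
        by_cases ha : a ∈ C <;> simp [hf, ha, mul_sum]

lemma prPLset_nonneg (R : Finset (Fin k ↪ Fin n)) (C : Finset (Fin n)) :
    0 ≤ prPLset n k u R C :=
  sum_nonneg fun r _ ↦ prPL_nonneg u r C

lemma prPLset_univ (C : Finset (Fin n)) :
    prPLset n k u univ C = if k ≤ #C then 1 else 0 := by
  induction k generalizing C with
  | zero => simp [prPLset, prPL]
  | succ k ih =>
    have hrec : prPLset n (k + 1) u univ C =
        ∑ a ∈ C, firstChoice u C a * if k + 1 ≤ #C then 1 else 0 := by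
      rw [prPLset_succ u (S := fun _ ↦ univ) (by simp)]
      refine sum_congr rfl fun a ha ↦ ?_
      rw [ih, ← card_erase_add_one ha]
      simp
    rw [hrec, ← sum_mul]
    split_ifs with hC
    · rw [sum_firstChoice u (card_pos.1 (by lia)), one_mul]
    · rw [mul_zero]

lemma prPLset_add_compl (R : Finset (Fin k ↪ Fin n)) (C : Finset (Fin n)) :
    prPLset n k u R C + prPLset n k u Rᶜ C = if k ≤ #C then 1 else 0 := by
  rw [← prPLset_univ u]
  exact sum_add_sum_compl R _

lemma prPLset_le_ite (R : Finset (Fin k ↪ Fin n)) (C : Finset (Fin n)) :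
    prPLset n k u R C ≤ if k ≤ #C then 1 else 0 := by
  linarith [prPLset_add_compl u R C, prPLset_nonneg u Rᶜ C]

lemma mem_topSet_succ {r : Fin (k + 1) ↪ Fin n} {ℓ : ℕ} :
    r ∈ topSet n (k + 1) i (ℓ + 1) ↔ r 0 = i ∨ Fin.Embedding.tail r ∈ topSet n k i ℓ := by
  simp [topSet, Fin.exists_fin_succ, Fin.tail]

lemma prPLset_topSet_succ (hC : k + 1 ≤ #C) (i : Fin n) (ℓ : ℕ) :
    prPLset n (k + 1) u (topSet n (k + 1) i (ℓ + 1)) C =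
      ∑ a ∈ C, firstChoice u C a *
        if a = i then 1 else prPLset n k u (topSet n k i ℓ) (C.erase a) := by
  rw [prPLset_succ u (S := fun a ↦ if a = i then univ else topSet n k i ℓ)
    (fun r ↦ by rw [mem_topSet_succ]; split_ifs with h <;> simp [h])]
  refine sum_congr rfl fun a ha ↦ ?_
  have hcard : k ≤ #(C.erase a) := by rw [card_erase_of_mem ha]; lia
  split_ifs
  · rw [prPLset_univ, if_pos hcard]
  · rfl

lemma prPLset_topSet_le_succ (hC : k + 1 ≤ #C) (i : Fin n) (ℓ : ℕ) :
    prPLset n k u (topSet n k i ℓ) C ≤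
      prPLset n (k + 1) u (topSet n (k + 1) i (ℓ + 1)) C := by
  induction k generalizing C ℓ with
  | zero =>
    have hzero : prPLset n 0 u (topSet n 0 i ℓ) C = 0 := by simp [topSet, prPLset]
    exact hzero.trans_le (prPLset_nonneg u _ C)
  | succ k ih =>
    cases ℓ with
    | zero =>
      have hzero : prPLset n (k + 1) u (topSet n (k + 1) i 0) C = 0 := by
        simp [topSet, prPLset]
      exact hzero.trans_le (prPLset_nonneg u _ C)
    | succ ℓ =>
      rw [prPLset_topSet_succ u (by lia), prPLset_topSet_succ u hC]
      gcongr with a ha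
      · exact firstChoice_nonneg u C a
      · split_ifs
        · rfl
        · exact ih (by rw [card_erase_of_mem ha]; lia) ℓ

lemma prPLset_topSet_succ_insert (hij : i ≠ j) (hj : j ∉ D) (hD : k + 1 ≤ #D) (ℓ : ℕ) :
    prPLset n (k + 1) u (topSet n (k + 1) i (ℓ + 1)) (insert j D) =
      firstChoice u (insert j D) j * prPLset n k u (topSet n k i ℓ) D +
      (1 - firstChoice u (insert j D) j) * ∑ a ∈ D, firstChoice u D a *
        if a = i then 1 else prPLset n k u (topSet n k i ℓ) (insert j (D.erase a)) := by
  rw [prPLset_topSet_succ u (hD.trans (card_le_card (subset_insert j D))), sum_insert hj,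
    if_neg hij.symm, erase_insert hj, mul_sum]
  congr 1
  refine sum_congr rfl fun a ha ↦ ?_
  have haj : j ≠ a := fun h ↦ hj (h ▸ ha)
  rw [firstChoice_insert u ⟨a, ha⟩ hj, mul_assoc, erase_insert_of_ne haj]

lemma prPLset_topSet_insert_le (hij : i ≠ j) (hj : j ∉ D) (hD : k ≤ #D) (ℓ : ℕ) :
    prPLset n k u (topSet n k i ℓ) (insert j D) ≤ prPLset n k u (topSet n k i ℓ) D := by
  induction k generalizing D ℓ with
  | zero => simp [topSet, prPLset]
  | succ k ih =>
    cases ℓ with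
    | zero => simp [topSet, prPLset]
    | succ ℓ =>
      set w := firstChoice u (insert j D) j
      have hw_nonneg : 0 ≤ w := firstChoice_nonneg u _ j
      have hw_le_one : w ≤ 1 := firstChoice_le_one u (mem_insert_self j D)
      rw [prPLset_topSet_succ_insert u hij hj hD]
      calc w * prPLset n k u (topSet n k i ℓ) D + (1 - w) * ∑ a ∈ D, firstChoice u D a *
            (if a = i then 1 else prPLset n k u (topSet n k i ℓ) (insert j (D.erase a)))
          ≤ w * prPLset n (k + 1) u (topSet n (k + 1) i (ℓ + 1)) D +
            (1 - w) * prPLset n (k + 1) u (topSet n (k + 1) i (ℓ + 1)) D := by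
            rw [prPLset_topSet_succ u hD]
            gcongr with a ha
            · rw [← prPLset_topSet_succ u hD]
              exact prPLset_topSet_le_succ u hD i ℓ
            · exact firstChoice_nonneg u D a
            · split_ifs
              · rfl
              · exact ih (fun h ↦ hj (mem_of_mem_erase h))
                  (by rw [card_erase_of_mem ha]; lia) ℓ
        _ = prPLset n (k + 1) u (topSet n (k + 1) i (ℓ + 1)) D := by ring

lemma prPLset_compl_topSet_le_insert (hij : i ≠ j) (hj : j ∉ D) (ℓ : ℕ) :
    prPLset n k u (topSet n k i ℓ)ᶜ D ≤ prPLset n k u (topSet n k i ℓ)ᶜ (insert j D) := by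
  by_cases hD : k ≤ #D
  · have hD' : k ≤ #(insert j D) := hD.trans (card_le_card (subset_insert j D))
    have h := prPLset_add_compl u (topSet n k i ℓ) D
    have h' := prPLset_add_compl u (topSet n k i ℓ) (insert j D)
    rw [if_pos hD] at h
    rw [if_pos hD'] at h'
    linarith [prPLset_topSet_insert_le u hij hj hD ℓ]
  · calc prPLset n k u (topSet n k i ℓ)ᶜ D
        ≤ if k ≤ #D then 1 else 0 := prPLset_le_ite u _ D
      _ = 0 := if_neg hD
      _ ≤ prPLset n k u (topSet n k i ℓ)ᶜ (insert j D) := prPLset_nonneg u _ _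

end PlackettLuce

section Consideration

variable {n k : ℕ} {p : Fin n → ℝ}

lemma considerWeight_nonneg (hp : ∀ a, p a ∈ Set.Icc 0 1) (C : Finset (Fin n)) :
    0 ≤ considerWeight n p C :=
  mul_nonneg (prod_nonneg fun a _ ↦ (hp a).1) (prod_nonneg fun a _ ↦ sub_nonneg.2 (hp a).2)

/-- The expectation of `φ` over the consideration set in which every item `a` is included
independently with probability `p a`, without conditioning on the size of that set. -/
def considerMean (p : Fin n → ℝ) (φ : Finset (Fin n) → ℝ) : ℝ :=
  ∑ C, considerWeight n p C * φ C

lemma considerMean_mono (hp : ∀ a, p a ∈ Set.Icc 0 1) {φ ψ : Finset (Fin n) → ℝ} (h : φ ≤ ψ) :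
    considerMean p φ ≤ considerMean p ψ :=
  sum_le_sum fun C _ ↦ mul_le_mul_of_nonneg_left (h C) (considerWeight_nonneg hp C)

lemma considerMean_pow_card (p : Fin n → ℝ) (s : ℝ) :
    considerMean p (fun C ↦ s ^ #C) = ∏ a, (p a * s + (1 - p a)) := by
  rw [prod_add, powerset_univ]
  refine sum_congr rfl fun C _ ↦ ?_
  rw [considerWeight, prod_mul_distrib, prod_const, ← compl_eq_univ_sdiff]
  ring

lemma considerMean_one (p : Fin n → ℝ) : considerMean p (fun _ ↦ 1) = 1 := by
  simpa using considerMean_pow_card p 1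

lemma considerMean_eq_sum_erase (p : Fin n → ℝ) (φ : Finset (Fin n) → ℝ) (j : Fin n) :
    considerMean p φ = ∑ D ∈ (univ.erase j).powerset,
      (∏ a ∈ D, p a) * (∏ a ∈ univ.erase j \ D, (1 - p a)) *
        ((1 - p j) * φ D + p j * φ (insert j D)) := by
  have huniv : (univ : Finset (Finset (Fin n))) = (insert j (univ.erase j)).powerset := by
    rw [insert_erase (mem_univ j), powerset_univ]
  rw [considerMean, huniv, sum_powerset_insert (notMem_erase j _), ← sum_add_distrib]
  refine sum_congr rfl fun D hD ↦ ?_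
  have hj : j ∉ D := fun h ↦ notMem_erase j _ (mem_powerset.1 hD h)
  have hcompl : Dᶜ = insert j (univ.erase j \ D) := by
    ext a; by_cases a = j <;> simp_all
  have hcompl_insert : (insert j D)ᶜ = univ.erase j \ D := by ext a; simp
  rw [considerWeight, considerWeight, prod_insert hj, hcompl_insert, hcompl,
    prod_insert (by simp)]
  ring

lemma considerMean_le_update (hp : ∀ a, p a ∈ Set.Icc 0 1) {j : Fin n} {q : ℝ} (hq : p j ≤ q)
    {φ : Finset (Fin n) → ℝ} (hφ : ∀ D, j ∉ D → φ D ≤ φ (insert j D)) :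
    considerMean p φ ≤ considerMean (Function.update p j q) φ := by
  rw [considerMean_eq_sum_erase p φ j, considerMean_eq_sum_erase _ φ j]
  refine sum_le_sum fun D hD ↦ ?_
  have hj : j ∉ D := fun h ↦ notMem_erase j _ (mem_powerset.1 hD h)
  rw [prod_update_of_notMem hj]
  have hprod : ∏ a ∈ univ.erase j \ D, (1 - Function.update p j q a) =
      ∏ a ∈ univ.erase j \ D, (1 - p a) :=
    prod_congr rfl fun a ha ↦ by rw [Function.update_of_ne (by grind)]
  rw [hprod, Function.update_self]
  refine mul_le_mul_of_nonneg_left ?_ (mul_nonneg (prod_nonneg fun a _ ↦ (hp a).1)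
    (prod_nonneg fun a _ ↦ sub_nonneg.2 (hp a).2))
  nlinarith [mul_nonneg (sub_nonneg.2 hq) (sub_nonneg.2 (hφ D hj))]

lemma zConst_eq_considerMean (n k : ℕ) (p : Fin n → ℝ) :
    zConst n k p = considerMean p (fun C ↦ if k ≤ #C then 1 else 0) := by
  simp [zConst, considerMean, sum_filter]

lemma zConst_le_one (hp : ∀ a, p a ∈ Set.Icc 0 1) : zConst n k p ≤ 1 := by
  calc zConst n k p = considerMean p (fun C ↦ if k ≤ #C then 1 else 0) :=
        zConst_eq_considerMean n k p
    _ ≤ considerMean p (fun _ ↦ 1) :=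
        considerMean_mono hp fun C ↦ by dsimp only; split_ifs <;> simp
    _ = 1 := considerMean_one p

lemma zConst_pos (hp : ∀ a, p a ∈ Set.Ioc 0 1) (hkn : k ≤ n) : 0 < zConst n k p := by
  have huniv : 0 < considerWeight n p univ := by
    simpa [considerWeight] using prod_pos fun a _ ↦ (hp a).1
  exact huniv.trans_le <| single_le_sum (f := considerWeight n p)
    (fun C _ ↦ considerWeight_nonneg (fun a ↦ Set.Ioc_subset_Icc_self (hp a)) C) (by simpa)

lemma considerMean_pow_card_le_exp (hp : ∀ a, p a ∈ Set.Icc 0 1) {s : ℝ} (hs : 0 ≤ s) :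
    considerMean p (fun C ↦ s ^ #C) ≤ Real.exp (-(1 - s) * ∑ a, p a) := by
  rw [considerMean_pow_card, mul_sum, Real.exp_sum]
  refine prod_le_prod (fun a _ ↦ ?_) (fun a _ ↦ ?_)
  · exact add_nonneg (mul_nonneg (hp a).1 hs) (sub_nonneg.2 (hp a).2)
  · linarith [Real.add_one_le_exp (-(1 - s) * p a)]

lemma one_sub_zConst_mul_pow_le (hp : ∀ a, p a ∈ Set.Icc 0 1) {s : ℝ} (hs : s ∈ Set.Icc 0 1) :
    (1 - zConst n k p) * s ^ k ≤ considerMean p (fun C ↦ s ^ #C) := by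
  calc (1 - zConst n k p) * s ^ k = considerMean p (fun C ↦ if k ≤ #C then 0 else s ^ k) := by
        rw [← considerMean_one p, zConst_eq_considerMean, considerMean, considerMean, considerMean,
          ← sum_sub_distrib, sum_mul]
        refine sum_congr rfl fun C _ ↦ ?_
        split_ifs <;> ring
    _ ≤ considerMean p (fun C ↦ s ^ #C) := by
        refine considerMean_mono hp fun C ↦ ?_
        split_ifs with hC
        · exact pow_nonneg hs.1 _
        · exact pow_le_pow_of_le_one hs.1 hs.2 (by lia)

lemma one_sub_zConst_le (hp : ∀ a, p a ∈ Set.Icc 0 1) {α : ℝ} (hα : 1 ≤ α)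
    (hsum : α * k ≤ ∑ a, p a) : 1 - zConst n k p ≤ (α * Real.exp (1 - α)) ^ k := by
  have : 0 < α := by linarith
  -- `s = α⁻¹` minimises the Chernoff bound `s⁻ᵏ * exp (-(1 - s) * (α * k))`.
  have hinv : α⁻¹ ∈ Set.Icc 0 1 := ⟨by positivity, inv_le_one_of_one_le₀ hα⟩
  have hexp : Real.exp (-(1 - α⁻¹) * ∑ a, p a) ≤ Real.exp (1 - α) ^ k := by
    rw [← Real.exp_nat_mul, Real.exp_le_exp]
    calc -(1 - α⁻¹) * ∑ a, p a ≤ -(1 - α⁻¹) * (α * k) :=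
          mul_le_mul_of_nonpos_left hsum (by linarith [hinv.2])
      _ = k * (1 - α) := by field_simp; ring
  have htail : (1 - zConst n k p) * α⁻¹ ^ k ≤ Real.exp (1 - α) ^ k :=
    (one_sub_zConst_mul_pow_le hp hinv).trans <|
      (considerMean_pow_card_le_exp hp hinv.1).trans hexp
  rw [inv_pow, ← div_eq_mul_inv, div_le_iff₀ (by positivity)] at htail
  rwa [mul_pow, mul_comm]

end Consideration

section PlackettLuceConsideration

variable {n k : ℕ} (u : Fin n → ℝ) {p : Fin n → ℝ}

lemma prPLCset_eq_div (p : Fin n → ℝ) (R : Finset (Fin k ↪ Fin n)) :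
    prPLCset n k u p R = considerMean p (prPLset n k u R) / zConst n k p := by
  simp only [prPLCset, prPLC]
  rw [sum_comm, considerMean, sum_div]
  refine sum_congr rfl fun C _ ↦ ?_
  rw [← mul_sum, ← prPLset, prC]
  split_ifs with hC
  · ring
  · have hzero : prPLset n k u R C = 0 :=
      le_antisymm ((prPLset_le_ite u R C).trans_eq (if_neg hC)) (prPLset_nonneg u R C)
    rw [hzero, mul_zero, mul_zero, zero_div]

lemma considerMean_prPLset_add_compl (p : Fin n → ℝ) (R : Finset (Fin k ↪ Fin n)) :
    considerMean p (prPLset n k u R) + considerMean p (prPLset n k u Rᶜ) = zConst n k p := by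
  simp only [considerMean, zConst_eq_considerMean, ← sum_add_distrib, ← mul_add,
    prPLset_add_compl]

lemma considerMean_prPLset_nonneg (hp : ∀ a, p a ∈ Set.Icc 0 1) (R : Finset (Fin k ↪ Fin n)) :
    0 ≤ considerMean p (prPLset n k u R) :=
  sum_nonneg fun C _ ↦ mul_nonneg (considerWeight_nonneg hp C) (prPLset_nonneg u R C)

lemma prPLCset_add_compl (hz : zConst n k p ≠ 0) (R : Finset (Fin k ↪ Fin n)) :
    prPLCset n k u p R + prPLCset n k u p Rᶜ = 1 := by
  rw [prPLCset_eq_div, prPLCset_eq_div, ← add_div, considerMean_prPLset_add_compl,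
    div_self hz]

lemma considerMean_prPLset_le_prPLCset (hp : ∀ a, p a ∈ Set.Icc 0 1) (hz : 0 < zConst n k p)
    (R : Finset (Fin k ↪ Fin n)) : considerMean p (prPLset n k u R) ≤ prPLCset n k u p R := by
  rw [prPLCset_eq_div]
  exact le_div_self (considerMean_prPLset_nonneg u hp R) hz (zConst_le_one hp)

lemma prPLCset_le_considerMean_prPLset_add (hp : ∀ a, p a ∈ Set.Icc 0 1) (hz : 0 < zConst n k p)
    (R : Finset (Fin k ↪ Fin n)) :
    prPLCset n k u p R ≤ considerMean p (prPLset n k u R) + (1 - zConst n k p) := by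
  have hcompl := considerMean_prPLset_le_prPLCset u hp hz Rᶜ
  linarith [prPLCset_add_compl u hz.ne' R, considerMean_prPLset_add_compl u p R]

end PlackettLuceConsideration

lemma mul_exp_one_sub_lt_one {x : ℝ} (hx : x ≠ 1) : x * Real.exp (1 - x) < 1 := by
  have h : x < Real.exp (x - 1) := by linarith [Real.add_one_lt_exp (sub_ne_zero.2 hx)]
  calc x * Real.exp (1 - x) < Real.exp (x - 1) * Real.exp (1 - x) := by gcongr
    _ = 1 := by rw [← Real.exp_add]; simp

lemma pow_mul_exp_one_sub_le_div {x : ℝ} (hx : 1 < x) {k : ℕ} (hk : k ≠ 0) :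
    (x * Real.exp (1 - x)) ^ k ≤
      (x * Real.exp (1 - x)) ^ k / (1 - (x * Real.exp (1 - x)) ^ k) := by
  have hbase : 0 ≤ x * Real.exp (1 - x) := by positivity
  have hpow : (x * Real.exp (1 - x)) ^ k < 1 :=
    pow_lt_one₀ hbase (mul_exp_one_sub_lt_one hx.ne') hk
  exact le_div_self (pow_nonneg hbase k) (sub_pos.2 hpow) (sub_le_self 1 (pow_nonneg hbase k))

theorem increase_pj_general {n k : ℕ} (u : Fin n → ℝ) {p : Fin n → ℝ} {i j : Fin n} {q : ℝ}
    (hp : ∀ a, p a ∈ Set.Ioc 0 1) (hkn : k ≤ n) (hij : i ≠ j) (hq : p j ≤ q) (hq_one : q ≤ 1)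
    (ℓ : ℕ) :
    prPLCset n k u (Function.update p j q) (topSet n k i ℓ) ≤
      prPLCset n k u p (topSet n k i ℓ) + (1 - zConst n k p) := by
  set R := topSet n k i ℓ
  set p' := Function.update p j q
  have hp' : ∀ a, p' a ∈ Set.Ioc 0 1 :=
    (Function.forall_update_iff p fun _ x ↦ x ∈ Set.Ioc 0 1).2
      ⟨⟨(hp j).1.trans_le hq, hq_one⟩, fun a _ ↦ hp a⟩
  have hp_Icc a : p a ∈ Set.Icc 0 1 := Set.Ioc_subset_Icc_self (hp a)
  have hp'_Icc a : p' a ∈ Set.Icc 0 1 := Set.Ioc_subset_Icc_self (hp' a)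
  have hz := zConst_pos hp hkn
  have hz' := zConst_pos hp' hkn
  have hcompl : prPLCset n k u p Rᶜ ≤ prPLCset n k u p' Rᶜ + (1 - zConst n k p) := calc
    prPLCset n k u p Rᶜ
      ≤ considerMean p (prPLset n k u Rᶜ) + (1 - zConst n k p) :=
        prPLCset_le_considerMean_prPLset_add u hp_Icc hz _
    _ ≤ considerMean p' (prPLset n k u Rᶜ) + (1 - zConst n k p) := by
        gcongr
        exact considerMean_le_update hp_Icc hq fun D hj ↦
          prPLset_compl_topSet_le_insert u hij hj ℓ
    _ ≤ prPLCset n k u p' Rᶜ + (1 - zConst n k p) := by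
        gcongr
        exact considerMean_prPLset_le_prPLCset u hp'_Icc hz' _
  linarith [prPLCset_add_compl u hz.ne' R, prPLCset_add_compl u hz'.ne' R]

/-- increasing `p j` to `p j'` cannot increase the probability that `i` is
ranked first, up to an additive error term. (`R_{i=1}` is `topSet n k i 1`.) -/
theorem increase_pj (n k : ℕ) (u p : Fin n → ℝ) (α : ℝ) (i j : Fin n) (pj' : ℝ)
    (hp : ∀ a, 0 < p a ∧ p a ≤ 1) (hk : 1 ≤ k) (hkn : k ≤ n)
    (hα : 1 < α) (hsum : α * k ≤ ∑ a, p a)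
    (hij : i ≠ j) (hlt : p j < pj') (hle : pj' ≤ 1) :
    prPLCset n k u (Function.update p j pj') (topSet n k i 1) ≤
      prPLCset n k u p (topSet n k i 1) +
        (α * Real.exp (1 - α)) ^ k / (1 - (α * Real.exp (1 - α)) ^ k) := by
  have htail : 1 - zConst n k p ≤ (α * Real.exp (1 - α)) ^ k :=
    one_sub_zConst_le (fun a ↦ Set.Ioc_subset_Icc_self (hp a)) hα.le hsum
  linarith [increase_pj_general u hp hkn hij hlt.le hle 1,
    pow_mul_exp_one_sub_le_div hα (k := k) (by lia)]
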